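/- (Lemma on the Z-correlator of the extracted state.) Assume the hypotheses of the α = √2 robust self-testing setting with projective observables and Tr(Wρ) ≥ 6 − ε. Define C_Z := (1/(4√2))·A₂ ⊗ [3(B₀ − B₁) − (B₁B₀B₁ − B₀B₁B₀)]. Then Tr(C_Z·ρ) ≥ 1 − (1/2)(4 + √2)·√ε. -/

import Mathlib

/-!
Put `S = B₀ + B₁`, `D = B₀ - B₁` and `T₀ = (S + √2 B₂)/2`, `T₁ = (S - √2 B₂)/2`, `T₂ = D/√2`.
Since `S² + D² = 4`, one has `T₀² + T₁² + T₂² = 3`, which gives the sum of squares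
`6 - W = ∑ᵢ (Aᵢ ⊗ 1 - 1 ⊗ Tᵢ)²`. With `Q = A₂ ⊗ T₂` the last square is `(1 - Q)²`, so
`Tr((1 - Q)² ρ) ≤ ε`.

From `D³ = 3D + B₁B₀B₁ - B₀B₁B₀` one gets `C_Z = (3Q - Q³)/2`. Moreover
`Q² = 2 - (1 ⊗ S)²/2`, so `Q ≤ √2`, and two factorizations finish the argument:
`1 - C_Z = (1 - Q)(2 + Q)(1 - Q)/2 ≤ (2 + √2)/2 · (1 - Q)²`, which suffices when `ε ≤ 1`, and
`1 + C_Z = (1 + Q)(2 - Q)(1 + Q)/2 ≥ 0`, i.e. `1 - C_Z ≤ 2`, which suffices when `ε ≥ 1`.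
-/

open Matrix
open scoped Kronecker ComplexOrder

noncomputable section

variable {m n : ℕ}

/-- The Bell operator `W` at `α = √2`:
`W = A₀⊗(B₀+B₁+√2 B₂) + A₁⊗(B₀+B₁−√2 B₂) + √2 A₂⊗(B₀−B₁)`. -/
def bellOpSqrt2 (A₀ A₁ A₂ : Matrix (Fin m) (Fin m) ℂ)
    (B₀ B₁ B₂ : Matrix (Fin n) (Fin n) ℂ) :
    Matrix (Fin m × Fin n) (Fin m × Fin n) ℂ :=
  A₀ ⊗ₖ (B₀ + B₁ + ((Real.sqrt 2 : ℝ) : ℂ) • B₂) +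
    A₁ ⊗ₖ (B₀ + B₁ - ((Real.sqrt 2 : ℝ) : ℂ) • B₂) +
    ((Real.sqrt 2 : ℝ) : ℂ) • (A₂ ⊗ₖ (B₀ - B₁))

/-- Partial trace over the second tensor factor (reduced state of Alice). -/
def ptraceB (ρ : Matrix (Fin m × Fin n) (Fin m × Fin n) ℂ) : Matrix (Fin m) (Fin m) ℂ :=
  Matrix.of fun i j => ∑ k : Fin n, ρ (i, k) (j, k)

/-- Partial trace over the first tensor factor (reduced state of Bob). -/
def ptraceA (ρ : Matrix (Fin m × Fin n) (Fin m × Fin n) ℂ) : Matrix (Fin n) (Fin n) ℂ :=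
  Matrix.of fun i j => ∑ k : Fin m, ρ (k, i) (k, j)

/-- The anticommutator `{M, N} = MN + NM`. -/
def acomm {d : ℕ} (M N : Matrix (Fin d) (Fin d) ℂ) : Matrix (Fin d) (Fin d) ℂ :=
  M * N + N * M

/-- The operator `C_X` built from the observables, whose expectation is the `X⊗X`
correlator of the extracted two-qubit state. -/
def CX (A₀ A₁ A₂ : Matrix (Fin m) (Fin m) ℂ) (B₀ B₁ : Matrix (Fin n) (Fin n) ℂ) :
    Matrix (Fin m × Fin n) (Fin m × Fin n) ℂ :=
  ((64 : ℂ)⁻¹) •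
    (((3 : ℂ) • (A₀ + A₁) - (A₁ * A₀ * A₁ + A₀ * A₁ * A₀) -
        (3 : ℂ) • (A₂ * (A₀ + A₁) * A₂) + A₂ * (A₁ * A₀ * A₁ + A₀ * A₁ * A₀) * A₂) ⊗ₖ
      ((3 : ℂ) • (B₀ + B₁) - (B₁ * B₀ * B₁ + B₀ * B₁ * B₀)))

/-- The operator `C_Z` built from the observables, whose expectation is the `Z⊗Z`
correlator of the extracted two-qubit state. -/
def CZ (A₂ : Matrix (Fin m) (Fin m) ℂ) (B₀ B₁ : Matrix (Fin n) (Fin n) ℂ) :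
    Matrix (Fin m × Fin n) (Fin m × Fin n) ℂ :=
  ((((4 * Real.sqrt 2)⁻¹ : ℝ)) : ℂ) •
    (A₂ ⊗ₖ ((3 : ℂ) • (B₀ - B₁) - (B₁ * B₀ * B₁ - B₀ * B₁ * B₀)))

/-- The real part of the expectation value `Tr(Xρ)`, as a real-linear functional of `X`. -/
def expect {ι : Type*} [Fintype ι] (ρ : Matrix ι ι ℂ) : Matrix ι ι ℂ →ₗ[ℝ] ℝ where
  toFun X := ((X * ρ).trace).re
  map_add' X Y := by simp [add_mul]
  map_smul' r X := by simp

lemma expect_nonneg {ι : Type*} [Fintype ι] {ρ : Matrix ι ι ℂ} (hρ : ρ.PosSemidef)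
    (M : Matrix ι ι ℂ) : 0 ≤ expect ρ (Mᴴ * M) := by
  have h := (hρ.mul_mul_conjTranspose_same M).trace_nonneg
  have e : (Mᴴ * M * ρ).trace = (M * ρ * Mᴴ).trace := by
    rw [mul_assoc, trace_mul_comm]
  change 0 ≤ ((Mᴴ * M * ρ).trace).re
  rw [e]
  exact (Complex.le_def.1 h).1

lemma expect_sq_nonneg {ι : Type*} [Fintype ι] {ρ : Matrix ι ι ℂ} (hρ : ρ.PosSemidef)
    {M : Matrix ι ι ℂ} (hM : M.IsHermitian) : 0 ≤ expect ρ (M * M) := by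
  simpa [hM.eq] using expect_nonneg hρ M

/-- `Q² + S²/2 = 2` forces `Q ≤ √2`, because
`2√2 (√2 - Q) = (√2 - Q)² + S²/2`; this is that inequality conjugated by `P`. -/
lemma expect_conj_le {ι : Type*} [Fintype ι] [DecidableEq ι] {ρ : Matrix ι ι ℂ}
    (hρ : ρ.PosSemidef) {P Q S : Matrix ι ι ℂ} (hP : P.IsHermitian) (hQ : Q.IsHermitian)
    (hS : S.IsHermitian) (h : Q * Q + (1 / 2 : ℝ) • (S * S) = (2 : ℝ) • 1) :
    expect ρ (P * Q * P) ≤ √2 * expect ρ (P * P) := by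
  have hq : √2 * √2 = 2 := Real.mul_self_sqrt (by norm_num)
  have h1 := expect_nonneg hρ ((√2 • (1 : Matrix ι ι ℂ) - Q) * P)
  have h2 := expect_nonneg hρ (S * P)
  have e : ((√2 • (1 : Matrix ι ι ℂ) - Q) * P)ᴴ * ((√2 • (1 : Matrix ι ι ℂ) - Q) * P)
      + (1 / 2 : ℝ) • ((S * P)ᴴ * (S * P)) = (2 * √2) • (√2 • (P * P) - P * Q * P) := by
    have h' : P * (Q * Q) * P + (1 / 2 : ℝ) • (P * (S * S) * P) = (2 : ℝ) • (P * P) := by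
      have := congrArg (fun X => P * X * P) h
      simpa [mul_add, add_mul] using this
    have h'' : P * (Q * Q) * P = (√2 * √2) • (P * P) - (1 / 2 : ℝ) • (P * (S * S) * P) := by
      rw [hq, ← h']; abel
    simp only [conjTranspose_mul, conjTranspose_sub, conjTranspose_smul, conjTranspose_one,
      hP.eq, hQ.eq, hS.eq, star_trivial]
    simp only [mul_sub, sub_mul, smul_mul_assoc, mul_smul_comm, mul_one, one_mul,
      ← mul_assoc] at h'' ⊢
    rw [h'']
    module
  have e' := congrArg (expect ρ) e
  simp only [map_add, map_sub, map_smul, smul_eq_mul] at e'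
  have hpos : 0 < √2 := by positivity
  nlinarith

/-- If `Q² ≤ 2` and the mean square deviation of `Q` from `1` is at most `ε`, then the mean of
`(3Q - Q³)/2` is close to `1`. The hypothesis `Q² ≤ 2` is encoded as `Q² = 2 - S²/2`. -/
lemma expect_cubic {ι : Type*} [Fintype ι] [DecidableEq ι] {ρ : Matrix ι ι ℂ}
    (hρ : ρ.PosSemidef) (hρtr : ρ.trace = 1) {Q S : Matrix ι ι ℂ} (hQ : Q.IsHermitian)
    (hS : S.IsHermitian) (h : Q * Q + (1 / 2 : ℝ) • (S * S) = (2 : ℝ) • 1)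
    {ε : ℝ} (hε : 0 ≤ ε) (hQε : expect ρ ((1 - Q) * (1 - Q)) ≤ ε) :
    1 - (1 / 2) * (4 + √2) * √ε ≤ expect ρ ((3 / 2 : ℝ) • Q - (1 / 2 : ℝ) • (Q * Q * Q)) := by
  have h1 : expect ρ 1 = 1 := by simp [expect, hρtr]
  have hp : (1 + Q).IsHermitian := isHermitian_one.add hQ
  have hm : (1 - Q).IsHermitian := isHermitian_one.sub hQ
  have cm := expect_conj_le hρ hm hQ hS h
  have cp := expect_conj_le hρ hp hQ hS h
  have sp := expect_sq_nonneg hρ hp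
  simp only [mul_sub, sub_mul, mul_add, add_mul, mul_one, one_mul, map_add, map_sub, map_smul,
    smul_eq_mul, h1] at cm cp sp hQε ⊢
  have hq0 : 0 ≤ √2 := Real.sqrt_nonneg 2
  have hq2 : √2 ≤ 2 := by rw [Real.sqrt_le_left (by norm_num)]; norm_num
  have he0 := Real.sqrt_nonneg ε
  have hee := Real.mul_self_sqrt hε
  -- For `√ε ≤ 1` the bound `(2 + √2)/2 · ε` on `1 - (3Q - Q³)/2` is used, otherwise the bound `2`.
  rcases le_total (√ε) 1 with hle | hle
  · have hsq : ε ≤ √ε := by nlinarith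
    have := mul_le_mul_of_nonneg_left (hQε.trans hsq) (by positivity : 0 ≤ 2 + √2)
    nlinarith
  · have := mul_le_mul_of_nonneg_right hq2 sp
    have := mul_le_mul_of_nonneg_left hle (by positivity : 0 ≤ 4 + √2)
    nlinarith

/-- Writes differences as sums, so that Kronecker products expand by additivity alone. -/
lemma sub_eq_add_smul {ι : Type*} (M N : Matrix ι ι ℂ) : M - N = M + (-1 : ℝ) • N := by
  module

/-- The sum-of-squares decomposition
`4(6 - W) = (2A₀ - (S + √2 B₂))² + (2A₁ - (S - √2 B₂))² + 4(1 - Q)²` with `Q = A₂ ⊗ D/√2`. -/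
lemma bellOp_sos (A₀ A₁ A₂ : Matrix (Fin m) (Fin m) ℂ) (B₀ B₁ B₂ : Matrix (Fin n) (Fin n) ℂ)
    (hA₀ : A₀ * A₀ = 1) (hA₁ : A₁ * A₁ = 1) (hA₂ : A₂ * A₂ = 1)
    (hB₀ : B₀ * B₀ = 1) (hB₁ : B₁ * B₁ = 1) (hB₂ : B₂ * B₂ = 1)
    {X Y Q : Matrix (Fin m × Fin n) (Fin m × Fin n) ℂ}
    (hX : X = (2 : ℝ) • (A₀ ⊗ₖ 1) - 1 ⊗ₖ (B₀ + B₁ + √2 • B₂))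
    (hY : Y = (2 : ℝ) • (A₁ ⊗ₖ 1) - 1 ⊗ₖ (B₀ + B₁ - √2 • B₂))
    (hQ : Q = (√2 / 2) • (A₂ ⊗ₖ (B₀ - B₁))) :
    X * X + Y * Y + (4 : ℝ) • ((1 - Q) * (1 - Q))
      = (4 : ℝ) • ((6 : ℝ) • 1 - bellOpSqrt2 A₀ A₁ A₂ B₀ B₁ B₂) := by
  have hq : √2 ^ 2 = 2 := Real.sq_sqrt (by norm_num)
  subst hX hY hQ
  simp only [bellOpSqrt2, Complex.coe_smul, sub_eq_add_smul, mul_add, add_mul,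
    smul_mul_assoc, mul_smul_comm, ← mul_kronecker_mul, kronecker_add, kronecker_smul,
    mul_one, one_mul, smul_add, smul_smul,
    hA₀, hA₁, hA₂, hB₀, hB₁, hB₂, one_kronecker_one]
  match_scalars <;> ring_nf <;> simp [hq] <;> norm_num

lemma CZ_eq (A₂ : Matrix (Fin m) (Fin m) ℂ) (B₀ B₁ : Matrix (Fin n) (Fin n) ℂ)
    (hA₂ : A₂ * A₂ = 1) (hB₀ : B₀ * B₀ = 1) (hB₁ : B₁ * B₁ = 1)
    {Q : Matrix (Fin m × Fin n) (Fin m × Fin n) ℂ}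
    (hQ : Q = (√2 / 2) • (A₂ ⊗ₖ (B₀ - B₁))) :
    CZ A₂ B₀ B₁ = (3 / 2 : ℝ) • Q - (1 / 2 : ℝ) • (Q * Q * Q) := by
  have hq : √2 ^ 2 = 2 := Real.sq_sqrt (by norm_num)
  have hq3 : √2 ^ 3 = 2 * √2 := by rw [pow_succ, hq]
  have hqi : (√2)⁻¹ = √2 / 2 := by
    rw [inv_eq_iff_eq_inv, inv_div, Real.div_sqrt]
  have hD : (B₀ - B₁) * (B₀ - B₁) * (B₀ - B₁)
      = (3 : ℝ) • (B₀ - B₁) + (B₁ * B₀ * B₁ - B₀ * B₁ * B₀) := by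
    simp only [mul_sub, sub_mul, hB₀, hB₁, one_mul]
    rw [mul_assoc B₀ B₁ B₁, mul_assoc B₁ B₀ B₀, hB₀, hB₁, mul_one, mul_one]
    module
  have h3 : (3 : ℂ) • (B₀ - B₁) - (B₁ * B₀ * B₁ - B₀ * B₁ * B₀)
      = (6 : ℝ) • (B₀ - B₁) - (B₀ - B₁) * (B₀ - B₁) * (B₀ - B₁) := by
    have : (3 : ℂ) • (B₀ - B₁) = (3 : ℝ) • (B₀ - B₁) := by
      rw [← Complex.coe_smul]; norm_num
    rw [hD, this]
    module
  rw [CZ, h3, hQ, Complex.coe_smul, mul_inv, hqi]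
  generalize B₀ - B₁ = D
  simp only [sub_eq_add_smul, smul_mul_assoc, mul_smul_comm,
    ← mul_kronecker_mul, kronecker_add, kronecker_smul, smul_add, smul_smul, hA₂, one_mul]
  match_scalars <;> ring_nf <;> simp [hq3] <;> ring

/-- Lemma on the Z-correlator: with projective observables and
`Tr(Wρ) ≥ 6 − ε` at `α = √2`, `Tr(C_Z ρ) ≥ 1 − (1/2)(4 + √2)·√ε`. -/
theorem CZ_close_to_one
    (A₀ A₁ A₂ : Matrix (Fin m) (Fin m) ℂ) (B₀ B₁ B₂ : Matrix (Fin n) (Fin n) ℂ)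
    (hA₀ : A₀.IsHermitian) (hA₁ : A₁.IsHermitian) (hA₂ : A₂.IsHermitian)
    (hB₀ : B₀.IsHermitian) (hB₁ : B₁.IsHermitian) (hB₂ : B₂.IsHermitian)
    (hA₀sq : A₀ ^ 2 = 1) (hA₁sq : A₁ ^ 2 = 1) (hA₂sq : A₂ ^ 2 = 1)
    (hB₀sq : B₀ ^ 2 = 1) (hB₁sq : B₁ ^ 2 = 1) (hB₂sq : B₂ ^ 2 = 1)
    (ρ : Matrix (Fin m × Fin n) (Fin m × Fin n) ℂ)
    (hρ : ρ.PosSemidef) (hρtr : ρ.trace = 1)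
    (ε : ℝ) (hε : 0 ≤ ε)
    (hviol : 6 - ε ≤ ((bellOpSqrt2 A₀ A₁ A₂ B₀ B₁ B₂ * ρ).trace).re) :
    1 - (1 / 2) * (4 + Real.sqrt 2) * Real.sqrt ε ≤ ((CZ A₂ B₀ B₁ * ρ).trace).re := by
  rw [pow_two] at hA₀sq hA₁sq hA₂sq hB₀sq hB₁sq hB₂sq
  have hq : √2 ^ 2 = 2 := Real.sq_sqrt (by norm_num)
  have kron : ∀ {A : Matrix (Fin m) (Fin m) ℂ} {B : Matrix (Fin n) (Fin n) ℂ},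
      A.IsHermitian → B.IsHermitian → (A ⊗ₖ B).IsHermitian := fun hA hB => by
    rw [IsHermitian, conjTranspose_kronecker, hA.eq, hB.eq]
  have rsmul : ∀ {ι : Type} {A : Matrix ι ι ℂ} (r : ℝ), A.IsHermitian → (r • A).IsHermitian :=
    fun r hA => by rw [IsHermitian, conjTranspose_smul, hA.eq, star_trivial]
  obtain ⟨X, hX⟩ : ∃ X, X = (2 : ℝ) • (A₀ ⊗ₖ 1) - 1 ⊗ₖ (B₀ + B₁ + √2 • B₂) := ⟨_, rfl⟩
  obtain ⟨Y, hY⟩ : ∃ Y, Y = (2 : ℝ) • (A₁ ⊗ₖ 1) - 1 ⊗ₖ (B₀ + B₁ - √2 • B₂) := ⟨_, rfl⟩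
  obtain ⟨Q, hQ⟩ : ∃ Q, Q = (√2 / 2) • (A₂ ⊗ₖ (B₀ - B₁)) := ⟨_, rfl⟩
  have hXh : X.IsHermitian := hX ▸ (rsmul 2 (kron hA₀ isHermitian_one)).sub
    (kron isHermitian_one ((hB₀.add hB₁).add (rsmul _ hB₂)))
  have hYh : Y.IsHermitian := hY ▸ (rsmul 2 (kron hA₁ isHermitian_one)).sub
    (kron isHermitian_one ((hB₀.add hB₁).sub (rsmul _ hB₂)))
  have hQh : Q.IsHermitian := hQ ▸ rsmul _ (kron hA₂ (hB₀.sub hB₁))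
  have hSh : ((1 : Matrix (Fin m) (Fin m) ℂ) ⊗ₖ (B₀ + B₁)).IsHermitian :=
    kron isHermitian_one (hB₀.add hB₁)
  have hQS : Q * Q + (1 / 2 : ℝ) • (((1 : Matrix (Fin m) (Fin m) ℂ) ⊗ₖ (B₀ + B₁)) *
      ((1 : Matrix (Fin m) (Fin m) ℂ) ⊗ₖ (B₀ + B₁))) = (2 : ℝ) • 1 := by
    subst hQ
    simp only [sub_eq_add_smul, mul_add, add_mul,
      smul_mul_assoc, mul_smul_comm, ← mul_kronecker_mul, kronecker_add,
      kronecker_smul, mul_one, smul_add, smul_smul, hA₂sq, hB₀sq, hB₁sq, one_kronecker_one]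
    match_scalars <;> ring_nf <;> simp [hq] <;> norm_num
  have hone : expect ρ 1 = 1 := by simp [expect, hρtr]
  have sos := congrArg (expect ρ)
    (bellOp_sos A₀ A₁ A₂ B₀ B₁ B₂ hA₀sq hA₁sq hA₂sq hB₀sq hB₁sq hB₂sq hX hY hQ)
  rw [map_add, map_add, map_smul, map_smul, map_sub, map_smul, hone] at sos
  simp only [smul_eq_mul] at sos
  have hXX := expect_sq_nonneg hρ hXh
  have hYY := expect_sq_nonneg hρ hYh
  have hviol' : 6 - ε ≤ expect ρ (bellOpSqrt2 A₀ A₁ A₂ B₀ B₁ B₂) := hviol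
  have key := expect_cubic hρ hρtr hQh hSh hQS hε (by linarith)
  rw [← CZ_eq A₂ B₀ B₁ hA₂sq hB₀sq hB₁sq hQ] at key
  exact key

end
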